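/- arXiv:2508.04336 — 2 statements merged into one kernel-verified Lean document; each statement's English description precedes it below -/
import Mathlib

section
/- Let k be an algebraically closed field of characteristic 0, let n ≥ 2 and d ≥ 2, and let F₁, F₂ ∈ k[x₀,…,x_{n+1}] be smooth homogeneous polynomials of degree d. If the polynomials x_{n+2}^d − F₁ and x_{n+2}^d − F₂ in k[x₀,…,x_{n+2}] are projectively equivalent, then F₁ and F₂ are projectively equivalent. -/
/-!
Write `V × k` for the space of the cyclic cover, with `G₁ (x, t) = t ^ d - F₁ x` and
`G₂ (x, t) = t ^ d - F₂ x`, and let `M` be a linear automorphism with `G₁ ∘ M = c • G₂`. If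
`z ^ d = c`, then the terms `t ^ d` cancel in this identity along the hyperplane `H` where the last
coordinate of `M v` is `z` times that of `v`, which leaves `F₁ (M v).1 = c * F₂ v.1`. Hence `F₁` and
`F₂` are equivalent as soon as both `H` and `M H` project isomorphically to `V`, that is, as soon as
`(0, 1)` lies in neither of them. Each of these two conditions excludes at most one `d`-th root `z`
of `c`, so a suitable `z` exists if `3 ≤ d`. For `d = 2` a root excluded by the second condition is
also excluded by the first, which leaves one of the two square roots.
-/

open MvPolynomial

/-- `substMatrix g F` is the polynomial `F(g·x)`, obtained from `F` by the linear
substitution `xᵢ ↦ ∑ⱼ gᵢⱼ xⱼ`. -/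
noncomputable def substMatrix {k : Type*} [CommRing k] {N : ℕ}
    (g : Matrix (Fin N) (Fin N) k) (F : MvPolynomial (Fin N) k) : MvPolynomial (Fin N) k :=
  MvPolynomial.aeval (fun i => ∑ j, MvPolynomial.C (g i j) * MvPolynomial.X j) F

/-- Two polynomials `F, F'` in `N` variables are projectively equivalent if
`F(g·x) = c • F'` for some `g ∈ GL_N(k)` and `c ∈ kˣ`. -/
def ProjectivelyEquivalent {k : Type*} [CommRing k] {N : ℕ}
    (F F' : MvPolynomial (Fin N) k) : Prop :=
  ∃ g : GL (Fin N) k, ∃ c : kˣ,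
    substMatrix (g : Matrix (Fin N) (Fin N) k) F = (c : k) • F'

/-- A polynomial is smooth if the only common zero of its partial derivatives is the origin. -/
def SmoothPoly {k : Type*} [CommRing k] {N : ℕ} (F : MvPolynomial (Fin N) k) : Prop :=
  ∀ x : Fin N → k, (∀ i, MvPolynomial.eval x (MvPolynomial.pderiv i F) = 0) → x = 0

section Roots

variable {k : Type*} [Field k] [IsSepClosed k]

theorem exists_pow_eq_notMem {d : ℕ} [NeZero (d : k)] {c : k} (hc : c ≠ 0) (s : Finset k)
    (hs : s.card < d) : ∃ z ∉ s, z ^ d = c := by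
  classical
  have hsep := Polynomial.separable_X_pow_sub_C c (NeZero.ne (d : k)) hc
  have hcard : (Polynomial.nthRoots d c).toFinset.card = d := by
    rw [Polynomial.nthRoots, Multiset.toFinset_card_of_nodup (Polynomial.nodup_roots hsep),
      ← (IsSepClosed.splits_of_separable _ hsep).natDegree_eq_card_roots,
      Polynomial.natDegree_X_pow_sub_C]
  obtain ⟨z, hz, hzs⟩ := Finset.exists_mem_notMem_of_card_lt_card (hs.trans_eq hcard.symm)
  exact ⟨z, hzs, (Polynomial.mem_nthRoots (by lia)).mp (Multiset.mem_toFinset.mp hz)⟩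

variable (k) in
theorem infinite_of_isSepClosed : Infinite k := by
  by_contra hfin
  have := fintypeOfNotInfinite hfin
  -- Since `|k| + 1` equals `1` in `k`, there would be `|k| + 1` distinct roots of unity.
  have : NeZero ((Fintype.card k + 1 : ℕ) : k) := ⟨by simp⟩
  obtain ⟨z, hz, -⟩ :=
    exists_pow_eq_notMem one_ne_zero (Finset.univ : Finset k) (Nat.lt_succ_self (Fintype.card k))
  exact hz (Finset.mem_univ z)

end Roots

section LinearAlgebra

theorem ker_fst_comp_linearEquiv {R E V : Type*} [Semiring R] [AddCommMonoid E] [Module R E]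
    [AddCommMonoid V] [Module R V] (M : E ≃ₗ[R] V × R) :
    LinearMap.ker (LinearMap.fst R V R ∘ₗ M.toLinearMap) = R ∙ M.symm (0, 1) := by
  ext v
  simp only [LinearMap.mem_ker, Submodule.mem_span_singleton, ← map_smul,
    LinearEquiv.symm_apply_eq, Prod.smul_mk, smul_zero, smul_eq_mul, mul_one]
  exact ⟨fun hv => ⟨(M v).2, Prod.ext hv.symm rfl⟩, fun ⟨t, ht⟩ => congrArg Prod.fst ht.symm⟩

theorem bijective_fst_comp_domRestrict_ker {k E V : Type*} [Field k] [AddCommGroup E]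
    [Module k E] [AddCommGroup V] [Module k V] (M : E ≃ₗ[k] V × k) {φ : E →ₗ[k] k}
    (hφ : φ (M.symm (0, 1)) ≠ 0) :
    Function.Bijective
      ((LinearMap.fst k V k ∘ₗ M.toLinearMap).domRestrict (LinearMap.ker φ)) := by
  have hsurj : Function.Surjective (LinearMap.fst k V k ∘ₗ M.toLinearMap) :=
    Prod.fst_surjective.comp M.surjective
  constructor
  · rw [LinearMap.injective_domRestrict_iff, ker_fst_comp_linearEquiv]
    exact Submodule.disjoint_span_singleton_of_notMem hφ
  · rw [LinearMap.surjective_domRestrict_iff hsurj, ker_fst_comp_linearEquiv, codisjoint_comm,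
      codisjoint_iff]
    exact LinearMap.span_singleton_sup_ker_eq_top φ hφ

theorem apply_snd_eq_mul_symm_apply_snd_of_sq {R V₁ V₂ : Type*} [CommRing R]
    [NoZeroDivisors R] [AddCommGroup V₁] [Module R V₁] [AddCommGroup V₂] [Module R V₂]
    {M : (V₂ × R) ≃ₗ[R] V₁ × R} {F₁ : V₁ → R} {F₂ : V₂ → R} {c : R} (h₂ : (2 : R) ≠ 0)
    (hM : ∀ v, (M v).2 ^ 2 - F₁ (M v).1 = c * (v.2 ^ 2 - F₂ v.1)) :
    (M (0, 1)).2 = c * (M.symm (0, 1)).2 := by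
  -- In `hM (e + w) - hM e - hM w + hM 0`, where `e = (0, 1)` and `M w = e`, the values of `F₁` and
  -- `F₂` cancel in pairs, leaving the cross terms of the squares.
  have hsum := hM ((0, 1) + M.symm (0, 1))
  have he := hM (0, 1)
  have hw := hM (M.symm (0, 1))
  have hzero := hM 0
  simp only [map_add, map_zero, LinearEquiv.apply_symm_apply, Prod.fst_add, Prod.snd_add,
    Prod.fst_zero, Prod.snd_zero, add_zero, zero_add] at hsum he hw hzero
  apply mul_left_cancel₀ h₂
  linear_combination hsum - he - hw + hzero

variable {k V₁ V₂ : Type*} [Field k] [AddCommGroup V₁] [Module k V₁] [AddCommGroup V₂] [Module k V₂]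
  {M : (V₂ × k) ≃ₗ[k] V₁ × k} {F₁ : V₁ → k} {F₂ : V₂ → k} {c : k} {d : ℕ}

theorem exists_linearEquiv_of_pow_eq
    (hM : ∀ v, (M v).2 ^ d - F₁ (M v).1 = c * (v.2 ^ d - F₂ v.1)) {z : k} (hz : z ^ d = c)
    (hMe : (M (0, 1)).2 ≠ z) (hMe' : z * (M.symm (0, 1)).2 ≠ 1) :
    ∃ B : V₂ ≃ₗ[k] V₁, ∀ x, F₁ (B x) = c * F₂ x := by
  let φ : V₂ × k →ₗ[k] k :=
    LinearMap.snd k V₁ k ∘ₗ M.toLinearMap - z • LinearMap.snd k V₂ k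
  have hφe : φ (0, 1) ≠ 0 := by simpa [φ, sub_eq_zero] using hMe
  have hφe' : φ (M.symm (0, 1)) ≠ 0 := by simpa [φ, sub_eq_zero] using hMe'.symm
  let p : LinearMap.ker φ ≃ₗ[k] V₂ := LinearEquiv.ofBijective _
    (bijective_fst_comp_domRestrict_ker (LinearEquiv.refl k (V₂ × k)) hφe)
  let q : LinearMap.ker φ ≃ₗ[k] V₁ := LinearEquiv.ofBijective _
    (bijective_fst_comp_domRestrict_ker M hφe')
  have hpq (v : LinearMap.ker φ) : F₁ (q v) = c * F₂ (p v) := by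
    have hv : (M v).2 = z * v.1.2 := sub_eq_zero.mp v.2
    have hMv := hM v
    rw [hv, mul_pow, hz, mul_sub] at hMv
    exact sub_right_injective hMv
  exact ⟨p.symm.trans q, fun x => by simpa using hpq (p.symm x)⟩

theorem exists_linearEquiv_of_cyclicCover [IsSepClosed k] [NeZero (d : k)] (hd : 2 ≤ d)
    (hc : c ≠ 0) (hM : ∀ v, (M v).2 ^ d - F₁ (M v).1 = c * (v.2 ^ d - F₂ v.1)) :
    ∃ B : V₂ ≃ₗ[k] V₁, ∀ x, F₁ (B x) = c * F₂ x := by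
  classical
  set a := (M (0, 1)).2
  set b := (M.symm (0, 1)).2
  obtain rfl | hd := hd.eq_or_lt
  · obtain ⟨z, hza, hz⟩ := exists_pow_eq_notMem hc {a} (by simp : _ < 2)
    have hab : a = c * b := apply_snd_eq_mul_symm_apply_snd_of_sq (NeZero.ne ((2 : ℕ) : k)) hM
    have haz : a ≠ z := fun h => hza (by simp [h])
    refine exists_linearEquiv_of_pow_eq hM hz haz fun hzb => haz ?_
    calc a = z ^ 2 * b := by rw [hab, hz]
      _ = z * (z * b) := by ring
      _ = z := by rw [hzb, mul_one]
  · obtain ⟨z, hzab, hz⟩ :=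
      exists_pow_eq_notMem hc {a, b⁻¹} (Finset.card_le_two.trans_lt hd)
    simp only [Finset.mem_insert, Finset.mem_singleton, not_or] at hzab
    exact exists_linearEquiv_of_pow_eq hM hz (Ne.symm hzab.1)
      fun hzb => hzab.2 (eq_inv_of_mul_eq_one_left hzb)

end LinearAlgebra

section Polynomials

variable {k : Type*} [CommRing k] {N : ℕ}

theorem eval_substMatrix (g : Matrix (Fin N) (Fin N) k) (F : MvPolynomial (Fin N) k)
    (x : Fin N → k) : eval x (substMatrix g F) = eval (g.mulVec x) F := by
  rw [substMatrix, ← coe_aeval_eq_eval, RingHom.coe_coe, comp_aeval_apply, ← coe_aeval_eq_eval]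
  simp only [map_sum, map_mul, aeval_C, aeval_X, Algebra.algebraMap_self_apply]
  rfl

theorem projectivelyEquivalent_iff_exists_linearEquiv [IsDomain k] [Infinite k]
    {F F' : MvPolynomial (Fin N) k} :
    ProjectivelyEquivalent F F' ↔ ∃ e : (Fin N → k) ≃ₗ[k] (Fin N → k), ∃ c : kˣ,
      ∀ x, eval (e x) F = c * eval x F' := by
  let toLinearEquiv := (Matrix.GeneralLinearGroup.toLin (n := Fin N) (R := k)).trans
    (LinearMap.GeneralLinearGroup.generalLinearEquiv k (Fin N → k))
  simp only [ProjectivelyEquivalent, MvPolynomial.funext_iff, eval_substMatrix, smul_eval]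
  exact (toLinearEquiv.surjective.exists (p := fun e => ∃ c : kˣ,
    ∀ x, eval (e x) F = c * eval x F')).symm

/-- The defining polynomial of the `d`-fold cyclic cover branched along `F = 0`; the new variable is
the last one. -/
noncomputable def cyclicCover (d : ℕ) (F : MvPolynomial (Fin N) k) :
    MvPolynomial (Fin (N + 1)) k :=
  X (Fin.last N) ^ d - rename Fin.castSucc F

variable (k N) in
/-- The coordinates of the cyclic cover, split into those of the base and the new one. -/
def initLastLinearEquiv : (Fin (N + 1) → k) ≃ₗ[k] (Fin N → k) × k where
  toFun v := (Fin.init v, v (Fin.last N))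
  invFun p := Fin.snoc p.1 p.2
  map_add' _ _ := rfl
  map_smul' _ _ := rfl
  left_inv v := Fin.snoc_init_self v
  right_inv p := by simp

theorem eval_cyclicCover (d : ℕ) (F : MvPolynomial (Fin N) k) (v : Fin (N + 1) → k) :
    eval v (cyclicCover d F) =
      (initLastLinearEquiv k N v).2 ^ d - eval (initLastLinearEquiv k N v).1 F := by
  simp only [cyclicCover, map_sub, map_pow, eval_X, eval_rename]
  rfl

end Polynomials

theorem cyclic_cover_determines_hypersurface_general {k : Type*} [Field k] [IsSepClosed k]
    {N d : ℕ} [NeZero (d : k)] (hd : 2 ≤ d) {F₁ F₂ : MvPolynomial (Fin N) k}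
    (H : ProjectivelyEquivalent (cyclicCover d F₁) (cyclicCover d F₂)) :
    ProjectivelyEquivalent F₁ F₂ := by
  have := infinite_of_isSepClosed k
  rw [projectivelyEquivalent_iff_exists_linearEquiv] at H ⊢
  obtain ⟨e, c, he⟩ := H
  let σ := initLastLinearEquiv k N
  let M : ((Fin N → k) × k) ≃ₗ[k] (Fin N → k) × k := σ.symm ≪≫ₗ e ≪≫ₗ σ
  have hM (v : (Fin N → k) × k) :
      (M v).2 ^ d - eval (M v).1 F₁ = c * (v.2 ^ d - eval v.1 F₂) := by
    simpa only [eval_cyclicCover, M, σ, LinearEquiv.trans_apply, LinearEquiv.apply_symm_apply]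
      using he (σ.symm v)
  obtain ⟨B, hB⟩ := exists_linearEquiv_of_cyclicCover (F₁ := fun x => eval x F₁)
    (F₂ := fun x => eval x F₂) hd c.ne_zero hM
  exact ⟨B, c, hB⟩

/-- If the cyclic covers `x_{n+2}^d − F₁` and `x_{n+2}^d − F₂` of two smooth degree-`d`
forms `F₁, F₂` in `x₀, …, x_{n+1}` are projectively equivalent, then so are `F₁` and `F₂`. -/
theorem cyclic_cover_determines_hypersurface
    {k : Type*} [Field k] [IsAlgClosed k] [CharZero k]
    (n d : ℕ) (hn : 2 ≤ n) (hd : 2 ≤ d)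
    (F₁ F₂ : MvPolynomial (Fin (n + 2)) k)
    (hF₁ : F₁.IsHomogeneous d) (hF₂ : F₂.IsHomogeneous d)
    (hs₁ : SmoothPoly F₁) (hs₂ : SmoothPoly F₂)
    (H : ProjectivelyEquivalent
      (MvPolynomial.X (Fin.last (n + 2)) ^ d -
        MvPolynomial.rename Fin.castSucc F₁)
      (MvPolynomial.X (Fin.last (n + 2)) ^ d -
        MvPolynomial.rename Fin.castSucc F₂)) :
    ProjectivelyEquivalent F₁ F₂ := by
  have : NeZero (d : k) := ⟨Nat.cast_ne_zero.mpr (by lia)⟩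
  exact cyclic_cover_determines_hypersurface_general hd H
end

section
/- Let k be a field of characteristic 0, let d ≥ 2, and let F₁, F₂ ∈ k[x₀,…,x_{n+1}] be homogeneous polynomials of degree d. Let M ∈ GL_{n+3}(k) be an invertible matrix such that M·e_{n+2} = c·e_{n+2} for some scalar c (where e_{n+2} is the last standard basis vector of k^{n+3}), and suppose that (x_{n+2}^d − F₁)(M·x) = λ·(x_{n+2}^d − F₂)(x) for some λ ∈ kˣ. Then: (i) λ = c^d; (ii) the last row of M vanishes off the diagonal, i.e. M_{n+2,j} = 0 for all 0 ≤ j ≤ n+1, so M is block diagonal; and (iii) the upper-left (n+2)×(n+2) block M' of M is invertible and satisfies F₁(M'·x') = λ·F₂(x'), where x' = (x₀,…,x_{n+1}). In particular F₁ and F₂ are projectively equivalent. -/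
/-!
Since `M` fixes the Galois point, its last column is `c • e`, so `M` acts on `x₀, …, x_{n+1}`
through its upper-left block `M'`, while the last variable `T` goes to `c T + L` for a linear form
`L` in the other variables. In powers of `T` the hypothesis reads
`(c T + L) ^ d - F₁(M'·x) = λ (T ^ d - F₂)`. The coefficient of `T ^ d` gives `λ = c ^ d`, that of
`T ^ (d - 1)` gives `d c ^ (d - 1) L = 0`, hence `L = 0`, and then the constant coefficient gives
`F₁(M'·x) = λ F₂`. Expanding along the last column, `det M = c det M'`, so `M'` is invertible.
-/

open MvPolynomial

theorem coeff_C_mul_X_add_C_pow {R : Type*} [CommSemiring R] (a b : R) (d m : ℕ) :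
    ((Polynomial.C a * Polynomial.X + Polynomial.C b) ^ d).coeff m =
      b ^ (d - m) * d.choose m * a ^ m := by
  have hcomp : Polynomial.C a * Polynomial.X + Polynomial.C b =
      (Polynomial.X + Polynomial.C b).comp (Polynomial.C a * Polynomial.X) := by simp
  rw [hcomp, ← Polynomial.pow_comp, Polynomial.comp_C_mul_X_coeff, Polynomial.coeff_X_add_C_pow]

section PurePowerEquation

variable {R : Type*} [CommRing R] {a b f g u : R} {d : ℕ}

theorem eq_pow_of_linear_pow_sub_C_eq (hd : d ≠ 0)
    (h : (Polynomial.C a * Polynomial.X + Polynomial.C b) ^ d - Polynomial.C f =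
      Polynomial.C u * (Polynomial.X ^ d - Polynomial.C g)) :
    u = a ^ d := by
  simpa [coeff_C_mul_X_add_C_pow, Polynomial.coeff_C, hd, eq_comm]
    using congrArg (Polynomial.coeff · d) h

theorem eq_zero_of_linear_pow_sub_C_eq (hd : 2 ≤ d) (hreg : IsSMulRegular R d)
    (hu : IsLeftRegular u)
    (h : (Polynomial.C a * Polynomial.X + Polynomial.C b) ^ d - Polynomial.C f =
      Polynomial.C u * (Polynomial.X ^ d - Polynomial.C g)) :
    b = 0 := by
  have hpow : u = a ^ d := eq_pow_of_linear_pow_sub_C_eq (by omega) h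
  obtain ⟨m, rfl⟩ : ∃ m, d = m + 1 + 1 := ⟨d - 2, by omega⟩
  have hcoeff : b * (m + 1 + 1 : R) * a ^ (m + 1) = 0 := by
    simpa [coeff_C_mul_X_add_C_pow, Polynomial.coeff_C, Polynomial.coeff_X_pow,
      Nat.choose_succ_self_right] using congrArg (Polynomial.coeff · (m + 1)) h
  have hsmul : u * ((m + 1 + 1) • b) = 0 := by
    calc u * ((m + 1 + 1) • b) = a * (b * (m + 1 + 1 : R) * a ^ (m + 1)) := by
          rw [hpow, nsmul_eq_mul]; push_cast; ring
      _ = 0 := by rw [hcoeff, mul_zero]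
  exact hreg.right_eq_zero_of_smul (hu.mul_left_eq_zero_iff.mp hsmul)

theorem eq_mul_of_C_mul_X_pow_sub_C_eq (hd : d ≠ 0)
    (h : (Polynomial.C a * Polynomial.X) ^ d - Polynomial.C f =
      Polynomial.C u * (Polynomial.X ^ d - Polynomial.C g)) :
    f = u * g := by
  simpa [mul_pow, Polynomial.mul_coeff_zero, Polynomial.coeff_X_pow, hd, hd.symm]
    using congrArg (Polynomial.coeff · 0) h

end PurePowerEquation

theorem isSMulRegular_mvPolynomial {σ R S : Type*} [CommSemiring R] [SMulZeroClass S R] {s : S}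
    (h : IsSMulRegular R s) : IsSMulRegular (MvPolynomial σ R) s := fun p q hpq ↦ by
  ext e
  exact h (by simpa only [coeff_smul] using congrArg (coeff e) hpq)

section LinearForms

variable {m n R : Type*} [Fintype n] [CommSemiring R]

theorem coeff_single_one_toMvPolynomial (A : Matrix m n R) (i : m) (j : n) :
    coeff (Finsupp.single j 1) (A.toMvPolynomial i) = A i j := by
  classical
  simp [Matrix.toMvPolynomial, coeff_sum, coeff_monomial, Finsupp.single_left_inj]

theorem toMvPolynomial_eq_rename_castSucc_add {N : ℕ} (A : Matrix m (Fin (N + 1)) R) (i : m) :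
    A.toMvPolynomial i =
      rename Fin.castSucc ((A.submatrix id Fin.castSucc).toMvPolynomial i) +
        C (A i (Fin.last N)) * X (Fin.last N) := by
  simp [Matrix.toMvPolynomial, Fin.sum_univ_castSucc, C_mul_X_eq_monomial, rename_monomial]

end LinearForms

section LastVariable

variable {R : Type*} [CommSemiring R] {N : ℕ}

variable (R N) in
/-- The identification `R[x₀, …, x_N] ≃ R[x₀, …, x_{N-1}][x_N]`, used to compare coefficients in
the last variable; Mathlib's `MvPolynomial.finSuccEquiv` singles out the variable `x₀` instead. -/
noncomputable def lastVarEquiv :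
    MvPolynomial (Fin (N + 1)) R ≃ₐ[R] Polynomial (MvPolynomial (Fin N) R) :=
  (renameEquiv R finSuccEquivLast).trans (optionEquivLeft R (Fin N))

theorem lastVarEquiv_X_last : lastVarEquiv R N (X (Fin.last N)) = Polynomial.X := by
  simp [lastVarEquiv]

theorem lastVarEquiv_C (r : R) : lastVarEquiv R N (C r) = Polynomial.C (C r) := by
  simp [lastVarEquiv]

theorem lastVarEquiv_rename_castSucc (F : MvPolynomial (Fin N) R) :
    lastVarEquiv R N (rename Fin.castSucc F) = Polynomial.C F := by
  have hcomp : (lastVarEquiv R N).toAlgHom.comp (rename Fin.castSucc) = Polynomial.CAlgHom := by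
    ext1 j
    simp [lastVarEquiv]
  exact DFunLike.congr_fun hcomp F

end LastVariable

section LastColumn

variable {R : Type*} [CommRing R] {N : ℕ}

theorem det_eq_mul_det_submatrix_castSucc {A : Matrix (Fin (N + 1)) (Fin (N + 1)) R}
    (hA : ∀ i : Fin N, A i.castSucc (Fin.last N) = 0) :
    A.det = A (Fin.last N) (Fin.last N) * (A.submatrix Fin.castSucc Fin.castSucc).det := by
  simp [A.det_succ_column (Fin.last N), Fin.sum_univ_castSucc, hA, ← two_mul]

theorem isUnit_submatrix_castSucc {A : Matrix (Fin (N + 1)) (Fin (N + 1)) R} (hunit : IsUnit A)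
    (hA : ∀ i : Fin N, A i.castSucc (Fin.last N) = 0) :
    IsUnit (A.submatrix Fin.castSucc Fin.castSucc) := by
  rw [Matrix.isUnit_iff_isUnit_det] at hunit ⊢
  rw [det_eq_mul_det_submatrix_castSucc hA] at hunit
  exact isUnit_of_mul_isUnit_right hunit

theorem substMatrix_X (A : Matrix (Fin N) (Fin N) R) (i : Fin N) :
    substMatrix A (X i) = A.toMvPolynomial i := by
  simp [substMatrix, Matrix.toMvPolynomial, C_mul_X_eq_monomial]

theorem substMatrix_rename_castSucc {A : Matrix (Fin (N + 1)) (Fin (N + 1)) R}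
    (hA : ∀ i : Fin N, A i.castSucc (Fin.last N) = 0) (F : MvPolynomial (Fin N) R) :
    substMatrix A (rename Fin.castSucc F) =
      rename Fin.castSucc (substMatrix (A.submatrix Fin.castSucc Fin.castSucc) F) := by
  rw [substMatrix, substMatrix, aeval_rename, comp_aeval_apply]
  congr 2 with i
  simp [Fin.sum_univ_castSucc, hA]

theorem lastVarEquiv_smul_X_last_pow_sub_rename (r : R) (d : ℕ) (F : MvPolynomial (Fin N) R) :
    lastVarEquiv R N (r • (X (Fin.last N) ^ d - rename Fin.castSucc F)) =
      Polynomial.C (C r) * (Polynomial.X ^ d - Polynomial.C F) := by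
  rw [smul_eq_C_mul, map_mul, map_sub, map_pow, lastVarEquiv_C, lastVarEquiv_X_last,
    lastVarEquiv_rename_castSucc]

theorem lastVarEquiv_substMatrix_X_last_pow_sub_rename
    {A : Matrix (Fin (N + 1)) (Fin (N + 1)) R}
    (hA : ∀ i : Fin N, A i.castSucc (Fin.last N) = 0) (d : ℕ) (F : MvPolynomial (Fin N) R) :
    lastVarEquiv R N (substMatrix A (X (Fin.last N) ^ d - rename Fin.castSucc F)) =
      (Polynomial.C (C (A (Fin.last N) (Fin.last N))) * Polynomial.X +
        Polynomial.C ((A.submatrix id Fin.castSucc).toMvPolynomial (Fin.last N))) ^ d -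
      Polynomial.C (substMatrix (A.submatrix Fin.castSucc Fin.castSucc) F) := by
  have hsub : substMatrix A (X (Fin.last N) ^ d - rename Fin.castSucc F) =
      substMatrix A (X (Fin.last N)) ^ d - substMatrix A (rename Fin.castSucc F) := by
    simp only [substMatrix, map_sub, map_pow]
  rw [hsub, substMatrix_X, substMatrix_rename_castSucc hA, toMvPolynomial_eq_rename_castSucc_add,
    map_sub, map_pow, map_add, map_mul, lastVarEquiv_rename_castSucc,
    lastVarEquiv_rename_castSucc, lastVarEquiv_C, lastVarEquiv_X_last, add_comm]

end LastColumn

theorem block_diagonal_of_fixes_galois_point_general {k : Type*} [CommRing k] {N d : ℕ}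
    (hd : 2 ≤ d) (hreg : IsSMulRegular k d) {F₁ F₂ : MvPolynomial (Fin N) k}
    {M : GL (Fin (N + 1)) k} {c : k}
    (hc : M.val.mulVec (Pi.single (Fin.last N) 1) = c • Pi.single (Fin.last N) 1)
    {lam : kˣ}
    (heq : substMatrix M.val (X (Fin.last N) ^ d - rename Fin.castSucc F₁) =
      (lam : k) • (X (Fin.last N) ^ d - rename Fin.castSucc F₂)) :
    (lam : k) = c ^ d ∧
    (∀ j : Fin N, M.val (Fin.last N) j.castSucc = 0) ∧
    IsUnit (M.val.submatrix Fin.castSucc Fin.castSucc) ∧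
    substMatrix (M.val.submatrix Fin.castSucc Fin.castSucc) F₁ = (lam : k) • F₂ ∧
    ProjectivelyEquivalent F₁ F₂ := by
  have hd0 : d ≠ 0 := by omega
  have hcol (i : Fin N) : M i.castSucc (Fin.last N) = 0 := by
    simpa using congrFun hc i.castSucc
  have hcorner : M (Fin.last N) (Fin.last N) = c := by
    simpa using congrFun hc (Fin.last N)
  have hpoly := congrArg (lastVarEquiv k N) heq
  rw [lastVarEquiv_substMatrix_X_last_pow_sub_rename hcol,
    lastVarEquiv_smul_X_last_pow_sub_rename, hcorner] at hpoly
  have hlam : (lam : k) = c ^ d :=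
    C_injective (Fin N) k (by rw [eq_pow_of_linear_pow_sub_C_eq hd0 hpoly, C_pow])
  have hform := eq_zero_of_linear_pow_sub_C_eq hd (isSMulRegular_mvPolynomial hreg)
    (lam.isUnit.map C).isRegular.left hpoly
  have hrow (j : Fin N) : M (Fin.last N) j.castSucc = 0 := by
    simpa [coeff_single_one_toMvPolynomial] using congrArg (coeff (Finsupp.single j 1)) hform
  have hblock := isUnit_submatrix_castSucc M.isUnit hcol
  have hF : substMatrix (M.val.submatrix Fin.castSucc Fin.castSucc) F₁ = (lam : k) • F₂ := by
    rw [hform, Polynomial.C_0, add_zero] at hpoly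
    rw [eq_mul_of_C_mul_X_pow_sub_C_eq hd0 hpoly, smul_eq_C_mul]
  exact ⟨hlam, hrow, hblock, hF, hblock.unit, lam, hF⟩

/-- If `M ∈ GL_{n+3}(k)` fixes the last basis vector up to the scalar `c` and carries the
cyclic cover equation `x_{n+2}^d − F₁` to `λ·(x_{n+2}^d − F₂)`, then `λ = c^d`, the last
row of `M` vanishes off the diagonal (so `M` is block diagonal), and the upper-left
`(n+2) × (n+2)` block `M'` is invertible with `F₁(M'·x') = λ·F₂(x')`; in particular
`F₁` and `F₂` are projectively equivalent. -/
theorem block_diagonal_of_fixes_galois_point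
    {k : Type*} [Field k] [CharZero k]
    (n d : ℕ) (hd : 2 ≤ d)
    (F₁ F₂ : MvPolynomial (Fin (n + 2)) k)
    (hF₁ : F₁.IsHomogeneous d) (hF₂ : F₂.IsHomogeneous d)
    (M : GL (Fin (n + 3)) k) (c : k)
    (hc : (M : Matrix (Fin (n + 3)) (Fin (n + 3)) k).mulVec
        (Pi.single (Fin.last (n + 2)) 1 : Fin (n + 3) → k) =
      c • (Pi.single (Fin.last (n + 2)) 1 : Fin (n + 3) → k))
    (lam : kˣ)
    (heq : substMatrix (M : Matrix (Fin (n + 3)) (Fin (n + 3)) k)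
        (MvPolynomial.X (Fin.last (n + 2)) ^ d - MvPolynomial.rename Fin.castSucc F₁) =
      (lam : k) •
        (MvPolynomial.X (Fin.last (n + 2)) ^ d - MvPolynomial.rename Fin.castSucc F₂)) :
    (lam : k) = c ^ d ∧
    (∀ j : Fin (n + 2),
      (M : Matrix (Fin (n + 3)) (Fin (n + 3)) k) (Fin.last (n + 2)) j.castSucc = 0) ∧
    IsUnit ((M : Matrix (Fin (n + 3)) (Fin (n + 3)) k).submatrix
      Fin.castSucc Fin.castSucc) ∧
    substMatrix ((M : Matrix (Fin (n + 3)) (Fin (n + 3)) k).submatrix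
      Fin.castSucc Fin.castSucc) F₁ = (lam : k) • F₂ ∧
    ProjectivelyEquivalent F₁ F₂ := by
  exact block_diagonal_of_fixes_galois_point_general hd (nsmul_right_injective (by omega)) hc heq
end
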